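/- Under the hypotheses below, the sets T₀, T₁, T₂, T₃, T₄ form a partition of G × U into nonempty inverse-closed subsets, and for all i, j ∈ {0,1,2,3,4} there exist nonnegative integers c⁰, c¹, c², c³, c⁴ such that in the integral group ring ℤ[G × U] one has T̲ᵢ · T̲ⱼ = c⁰·T̲₀ + c¹·T̲₁ + c²·T̲₂ + c³·T̲₃ + c⁴·T̲₄, where for a subset A of G × U, A̲ denotes the sum of the elements of A. In other words, the ℤ-span of {T̲₀, T̲₁, T̲₂, T̲₃, T̲₄} is a commutative subring of ℤ[G × U] (a symmetric S-ring of rank 5 over G × U). -/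

import Mathlib

open scoped Pointwise

/-- The sum of the elements of a finite subset `A` of a group `G`
in the integral group ring `ℤ[G]`. -/
noncomputable def grpSum (G : Type*) [Group G] (A : Finset G) : MonoidAlgebra ℤ G :=
  ∑ a ∈ A, MonoidAlgebra.of ℤ G a

/-!
Every basic set is closed under inversion, so its sum is fixed by the antipode of the Hopf algebra
`ℤ[G × U]`, an anti-automorphism. Hence if the span of the basic sums contains one of `x * y` and
`y * x`, for `x` and `y` in it, these products agree. It therefore suffices to multiply, in one
order, the members of a more convenient basis of the span, namely `1` and the sums `S`, `N`, `G`,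
`J` over `T₃`, `N × 1`, `G × 1` and `G × (U ∖ 1)`. There `S * N = J` because each `X u` is a left
transversal of `N`, products with `G` and `J` only count elements, and `S * S` is given by the
linking equations. The structure constants are nonnegative because the coefficients of a product
of two set sums count pairs.
-/

section Convolution

variable {U R : Type*} [Group U] [Fintype U] [DecidableEq U] [Semiring R]

-- When `U` is trivial the truncated difference `card U - 2` multiplies an empty sum.
lemma sum_erase_one_mul_sum_erase_one {f g h : U → R} {z : R}
    (hinv : ∀ u ≠ 1, f u * g u⁻¹ = z)
    (hmul : ∀ u v, u ≠ 1 → v ≠ 1 → u * v ≠ 1 → f u * g v = h (u * v)) :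
    (∑ u ∈ Finset.univ.erase 1, f u) * ∑ v ∈ Finset.univ.erase 1, g v =
      (Fintype.card U - 1) • z + (Fintype.card U - 2) • ∑ u ∈ Finset.univ.erase 1, h u := by
  have card_erase : (Finset.univ.erase (1 : U)).card = Fintype.card U - 1 :=
    Finset.card_erase_of_mem (Finset.mem_univ 1)
  have row_sum : ∀ u ∈ Finset.univ.erase (1 : U), f u * ∑ v ∈ Finset.univ.erase 1, g v =
      z + ∑ v ∈ (Finset.univ.erase 1).erase u, h v := by
    intro u hu
    have hu : u ≠ 1 := Finset.ne_of_mem_erase hu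
    rw [Finset.mul_sum, ← Finset.add_sum_erase _ _ (a := u⁻¹) (by simp [hu]), hinv u hu]
    congr 1
    refine Finset.sum_equiv (Equiv.mulLeft u) (fun v ↦ ?_) (fun v hv ↦ ?_)
    · simp [mul_eq_one_iff_eq_inv', and_comm]
    · obtain ⟨hvu, hv, -⟩ : v ≠ u⁻¹ ∧ v ≠ 1 ∧ v ∈ Finset.univ := by
        simpa only [Finset.mem_erase] using hv
      exact hmul u v hu hv fun huv ↦ hvu (eq_inv_of_mul_eq_one_right huv)
  have column_sum : ∑ u ∈ Finset.univ.erase (1 : U), ∑ v ∈ (Finset.univ.erase 1).erase u, h v =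
      (Fintype.card U - 2) • ∑ u ∈ Finset.univ.erase 1, h u := by
    rw [Finset.sum_comm' (t' := Finset.univ.erase 1) (s' := fun v ↦ (Finset.univ.erase 1).erase v)
      (by grind), Finset.smul_sum]
    refine Finset.sum_congr rfl fun v hv ↦ ?_
    rw [Finset.sum_const, Finset.card_erase_of_mem hv, card_erase, Nat.sub_sub]
  rw [Finset.sum_mul, Finset.sum_congr rfl row_sum, Finset.sum_add_distrib, column_sum,
    Finset.sum_const, card_erase]

end Convolution

section HopfAlgebra

open HopfAlgebra

variable (R A : Type*) [CommSemiring R] [Semiring A] [HopfAlgebra R A]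

/-- The elements of a Hopf algebra fixed by its antipode. In a group ring the antipode is the
linear extension of `g ↦ g⁻¹`, so the sum over an inverse-closed set is such an element. -/
def antipodeFixed : Submodule R A :=
  LinearMap.eqLocus (antipode R) LinearMap.id

variable {R A}

lemma commute_of_mem_antipodeFixed {x y : A} (hx : x ∈ antipodeFixed R A)
    (hy : y ∈ antipodeFixed R A) (hxy : x * y ∈ antipodeFixed R A) : Commute x y :=
  calc x * y = antipode R (x * y) := hxy.symm
    _ = antipode R y * antipode R x := antipode_mul_antidistrib x y
    _ = y * x := congrArg₂ (· * ·) hy hx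

lemma mul_mem_span_range_of_le_antipodeFixed {ι : Type*} [LinearOrder ι] {b : ι → A}
    (hfix : Submodule.span R (Set.range b) ≤ antipodeFixed R A)
    (hmul : ∀ i j, i ≤ j → b i * b j ∈ Submodule.span R (Set.range b)) {x y : A}
    (hx : x ∈ Submodule.span R (Set.range b)) (hy : y ∈ Submodule.span R (Set.range b)) :
    x * y ∈ Submodule.span R (Set.range b) := by
  have hb (i : ι) : b i ∈ antipodeFixed R A := hfix (Submodule.subset_span ⟨i, rfl⟩)
  suffices hle : Submodule.span R (Set.range b) * Submodule.span R (Set.range b) ≤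
      Submodule.span R (Set.range b) from hle (Submodule.mul_mem_mul hx hy)
  rw [Submodule.span_mul_span, Submodule.span_le]
  rintro _ ⟨_, ⟨i, rfl⟩, _, ⟨j, rfl⟩, rfl⟩
  rcases le_total i j with hij | hji
  · exact hmul i j hij
  · have hcomm := commute_of_mem_antipodeFixed (hb j) (hb i) (hfix (hmul j i hji))
    exact (congrArg (· ∈ _) hcomm.eq).mp (hmul j i hji)

end HopfAlgebra

section Transversal

variable {G : Type*} [Group G] (N : Subgroup G)

lemma inv_mul_mem_comm {g h : G} : g⁻¹ * h ∈ N ↔ h⁻¹ * g ∈ N := by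
  rw [← N.inv_mem_iff, mul_inv_rev, inv_inv]

lemma isComplement_iff_card_filter_eq_one [DecidablePred (· ∈ N)] {A : Finset G} :
    Subgroup.IsComplement (A : Set G) N ↔
      ∀ g : G, (A.filter fun x ↦ g⁻¹ * x ∈ N).card = 1 := by
  rw [Subgroup.isComplement_iff_existsUnique_inv_mul_mem]
  refine forall_congr' fun g ↦ ?_
  simp [Finset.card_eq_one_iff_existsUnique, ExistsUnique, inv_mul_mem_comm N (h := g),
    and_left_comm, and_assoc]

end Transversal

section GrpSum

variable {G : Type*} [Group G]

lemma grpSum_singleton_one : grpSum G {1} = 1 := by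
  rw [grpSum, Finset.sum_singleton, map_one]

lemma grpSum_mem_antipodeFixed [DecidableEq G] {A : Finset G} (hA : A⁻¹ = A) :
    grpSum G A ∈ antipodeFixed ℤ (MonoidAlgebra ℤ G) :=
  calc HopfAlgebra.antipode ℤ (grpSum G A) = ∑ a ∈ A, MonoidAlgebra.of ℤ G a⁻¹ := by
        simp [grpSum, MonoidAlgebra.of_apply]
    _ = grpSum G A⁻¹ := (Finset.sum_inv_index _ _).symm
    _ = grpSum G A := by rw [hA]

lemma grpSum_compl [Fintype G] [DecidableEq G] (A : Finset G) :
    grpSum G Aᶜ = grpSum G Finset.univ - grpSum G A :=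
  eq_sub_of_add_eq (Finset.sum_compl_add_sum A _)

lemma coeff_grpSum [DecidableEq G] (A : Finset G) (g : G) :
    (grpSum G A).coeff g = if g ∈ A then 1 else 0 := by
  simp [grpSum, MonoidAlgebra.of_apply, MonoidAlgebra.coeff_sum, Finsupp.single_apply]

lemma coeff_grpSum_mul_grpSum [DecidableEq G] (A B : Finset G) (g : G) :
    (grpSum G A * grpSum G B).coeff g = (A.filter fun a ↦ a⁻¹ * g ∈ B).card := by
  rw [grpSum, Finset.sum_mul]
  simp [MonoidAlgebra.of_apply, MonoidAlgebra.coeff_sum, coeff_grpSum]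

lemma exists_nat_coeff_of_grpSum_mul_mem_span {ι : Type*} [Fintype ι] {T : ι → Finset G}
    (hne : ∀ i, (T i).Nonempty) (hdisj : ∀ i j, i ≠ j → Disjoint (T i) (T j)) {A B : Finset G}
    (hAB : grpSum G A * grpSum G B ∈ Submodule.span ℤ (Set.range fun i ↦ grpSum G (T i))) :
    ∃ c : ι → ℕ, grpSum G A * grpSum G B = ∑ i, (c i : ℤ) • grpSum G (T i) := by
  classical
  obtain ⟨c, hc⟩ := (Submodule.mem_span_range_iff_exists_fun ℤ).1 hAB
  have coeff_eq (i : ι) {g : G} (hg : g ∈ T i) : (grpSum G A * grpSum G B).coeff g = c i := by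
    have hmem (k : ι) : g ∈ T k ↔ k = i :=
      ⟨fun hk ↦ by_contra fun hki ↦ Finset.disjoint_left.1 (hdisj k i hki) hk hg,
        fun hk ↦ hk ▸ hg⟩
    simp [-zsmul_eq_mul, ← hc, MonoidAlgebra.coeff_sum, coeff_grpSum, hmem]
  have c_nonneg (i : ι) : 0 ≤ c i := by
    obtain ⟨g, hg⟩ := hne i
    rw [← coeff_eq i hg, coeff_grpSum_mul_grpSum]
    exact Int.natCast_nonneg _
  exact ⟨fun i ↦ (c i).toNat, by simp only [Int.toNat_of_nonneg (c_nonneg _), hc]⟩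

variable [Fintype G] (N : Subgroup G) [DecidablePred (· ∈ N)]

lemma grpSum_notMem_subgroup :
    grpSum G {x | x ∉ N} = grpSum G Finset.univ - grpSum G {x | x ∈ N} := by
  classical rw [← Finset.compl_filter, grpSum_compl]

lemma grpSum_mul_grpSum_subgroup {A : Finset G} (hA : ∀ a ∈ A, a ∈ N) :
    grpSum G A * grpSum G {x | x ∈ N} = (A.card : ℤ) • grpSum G {x | x ∈ N} := by
  classical
  ext g
  have hmem : ∀ a ∈ A, (a⁻¹ * g ∈ N ↔ g ∈ N) := fun a ha ↦
    N.mul_mem_cancel_left (N.inv_mem (hA a ha))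
  simp only [coeff_grpSum_mul_grpSum, MonoidAlgebra.coeff_smul_apply, coeff_grpSum,
    Finset.mem_filter_univ, Finset.filter_congr hmem]
  by_cases hg : g ∈ N <;> simp [hg]

lemma grpSum_mul_grpSum_univ (A : Finset G) :
    grpSum G A * grpSum G Finset.univ = (A.card : ℤ) • grpSum G Finset.univ := by
  classical
  simpa using grpSum_mul_grpSum_subgroup (⊤ : Subgroup G) (A := A) (by simp)

lemma grpSum_mul_grpSum_subgroup_of_isComplement {A : Finset G}
    (hA : Subgroup.IsComplement (A : Set G) N) :
    grpSum G A * grpSum G {x | x ∈ N} = grpSum G Finset.univ := by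
  classical
  ext g
  simp [coeff_grpSum_mul_grpSum, coeff_grpSum, inv_mul_mem_comm N (h := g),
    (isComplement_iff_card_filter_eq_one N).1 hA g]

end GrpSum

section Layer

variable {R G U : Type*} [Semiring R]

/-- The linear embedding of `R[G]` into `R[G × U]` onto the span of `G × {u}`. -/
noncomputable def layer (u : U) : MonoidAlgebra R G →ₗ[R] MonoidAlgebra R (G × U) :=
  MonoidAlgebra.mapDomainLinearMap R R fun g ↦ (g, u)

lemma layer_mul_layer [Monoid G] [Monoid U] (u v : U) (a b : MonoidAlgebra R G) :
    layer u a * layer v b = layer (u * v) (a * b) := by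
  induction a using MonoidAlgebra.induction_linear with
  | zero => simp
  | add a₁ a₂ h₁ h₂ => simp only [map_add, add_mul, h₁, h₂]
  | single g r =>
    induction b using MonoidAlgebra.induction_linear with
    | zero => simp
    | add b₁ b₂ h₁ h₂ => simp only [map_add, mul_add, h₁, h₂]
    | single h s => simp [layer, MonoidAlgebra.single_mul_single]

lemma layer_one_one [Monoid G] [Monoid U] : layer (1 : U) (1 : MonoidAlgebra R G) = 1 := by
  simp [layer, MonoidAlgebra.one_def, Prod.one_eq_mk]

lemma layer_grpSum [Group G] [Group U] (u : U) (A : Finset G) :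
    layer u (grpSum G A) = grpSum (G × U) (A ×ˢ {u}) := by
  simp [layer, grpSum, MonoidAlgebra.of_apply]

lemma layer_one_mul_layer_one_univ [Group G] [Fintype G] [Group U] (A : Finset G) :
    layer (1 : U) (grpSum G A) * layer 1 (grpSum G Finset.univ) =
      (A.card : ℤ) • layer 1 (grpSum G Finset.univ) := by
  rw [layer_mul_layer, grpSum_mul_grpSum_univ, mul_one, map_smul]

lemma layer_one_mul_layer_one_subgroup [Group G] [Fintype G] [Group U]
    (N : Subgroup G) [DecidablePred (· ∈ N)] {A : Finset G} (hA : ∀ a ∈ A, a ∈ N) :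
    layer (1 : U) (grpSum G A) * layer 1 (grpSum G {x | x ∈ N}) =
      (A.card : ℤ) • layer 1 (grpSum G {x | x ∈ N}) := by
  rw [layer_mul_layer, grpSum_mul_grpSum_subgroup N hA, mul_one, map_smul]

variable [Fintype U] [DecidableEq U]

/-- `∑_{u ≠ 1} a u · u`, the element of `R[G × U]` with layers `a u` over `u ≠ 1` and with
zero layer over `1`. The value `a 1` is ignored. -/
noncomputable def offOne [One U] : (U → MonoidAlgebra R G) →ₗ[R] MonoidAlgebra R (G × U) :=
  ∑ u ∈ Finset.univ.erase 1, layer u ∘ₗ LinearMap.proj u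

lemma offOne_apply [One U] (a : U → MonoidAlgebra R G) :
    offOne a = ∑ u ∈ Finset.univ.erase 1, layer u (a u) := by
  simp [offOne, LinearMap.sum_apply]

lemma offOne_congr [One U] {a b : U → MonoidAlgebra R G} (h : ∀ u ≠ 1, a u = b u) :
    offOne a = offOne b := by
  simp only [offOne_apply]
  exact Finset.sum_congr rfl fun u hu ↦ by rw [h u (Finset.ne_of_mem_erase hu)]

lemma layer_one_mul_offOne [Monoid G] [Monoid U] (c : MonoidAlgebra R G)
    (a : U → MonoidAlgebra R G) : layer 1 c * offOne a = offOne fun u ↦ c * a u := by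
  simp only [offOne_apply, Finset.mul_sum, layer_mul_layer, one_mul]

lemma offOne_mul_layer_one [Monoid G] [Monoid U] (a : U → MonoidAlgebra R G)
    (c : MonoidAlgebra R G) : offOne a * layer 1 c = offOne fun u ↦ a u * c := by
  simp only [offOne_apply, Finset.sum_mul, layer_mul_layer, mul_one]

lemma offOne_mul_offOne [Monoid G] [Group U] {a b d : U → MonoidAlgebra R G}
    {c : MonoidAlgebra R G} (hinv : ∀ u ≠ 1, a u * b u⁻¹ = c)
    (hmul : ∀ u v, u ≠ 1 → v ≠ 1 → u * v ≠ 1 → a u * b v = d (u * v)) :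
    offOne a * offOne b =
      (Fintype.card U - 1) • layer 1 c + (Fintype.card U - 2) • offOne d := by
  simp only [offOne_apply]
  refine sum_erase_one_mul_sum_erase_one (fun u hu ↦ ?_) (fun u v hu hv huv ↦ ?_)
  · rw [layer_mul_layer, hinv u hu, mul_inv_cancel]
  · rw [layer_mul_layer, hmul u v hu hv huv]

lemma offOne_grpSum [Group G] [Fintype G] [DecidableEq G] [Group U] (Y : U → Finset G) :
    offOne (fun u ↦ grpSum G (Y u)) = grpSum (G × U) {p | p.2 ≠ 1 ∧ p.1 ∈ Y p.2} := by
  ext ⟨g, u⟩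
  simp only [offOne_apply, layer_grpSum, MonoidAlgebra.coeff_sum, Finsupp.finsetSum_apply,
    coeff_grpSum, Finset.mem_product, Finset.mem_singleton, Finset.mem_filter_univ,
    and_comm (a := g ∈ _), ite_and, Finset.sum_ite_eq, Finset.mem_erase, Finset.mem_univ, and_true]

variable [Group G] [Fintype G] [Group U]

lemma offOne_grpSum_compl [DecidableEq G] (Y : U → Finset G) :
    offOne (fun u ↦ grpSum G (Y u)ᶜ) =
      offOne (fun _ ↦ grpSum G Finset.univ) - offOne fun u ↦ grpSum G (Y u) := by
  simp only [grpSum_compl, ← map_sub]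
  rfl

lemma layer_one_mul_offOne_univ (A : Finset G) :
    layer (1 : U) (grpSum G A) * offOne (fun _ ↦ grpSum G Finset.univ) =
      (A.card : ℤ) • offOne fun _ ↦ grpSum G Finset.univ := by
  simp only [layer_one_mul_offOne, grpSum_mul_grpSum_univ, ← map_smul]
  rfl

variable {Y : U → Finset G} {m : ℕ}

lemma offOne_mul_layer_one_univ (hY : ∀ u ≠ 1, (Y u).card = m) :
    offOne (fun u ↦ grpSum G (Y u)) * layer 1 (grpSum G Finset.univ) =
      (m : ℤ) • offOne fun _ ↦ grpSum G Finset.univ := by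
  rw [offOne_mul_layer_one, ← map_smul]
  exact offOne_congr fun u hu ↦ by rw [grpSum_mul_grpSum_univ, hY u hu, Pi.smul_apply]

lemma offOne_mul_offOne_univ (hY : ∀ u ≠ 1, (Y u).card = m) :
    offOne (fun u ↦ grpSum G (Y u)) * offOne (fun _ ↦ grpSum G Finset.univ) =
      (Fintype.card U - 1) • (m : ℤ) • layer 1 (grpSum G Finset.univ) +
        (Fintype.card U - 2) • (m : ℤ) • offOne fun _ ↦ grpSum G Finset.univ := by
  have hmul (u : U) (hu : u ≠ 1) : grpSum G (Y u) * grpSum G Finset.univ =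
      (m : ℤ) • grpSum G Finset.univ := by
    rw [grpSum_mul_grpSum_univ, hY u hu]
  rw [← map_smul (layer 1), ← map_smul offOne]
  exact offOne_mul_offOne hmul fun u _ hu _ _ ↦ hmul u hu

end Layer

section LinkedSystem

variable {G U : Type*} [Group G] [Fintype G] [DecidableEq G] [Group U]

/-- A closed linked system of semiregular relative difference sets in `G` with forbidden subgroup
`N`, indexed by the non-identity elements of `U`. The set `X 1` carries no information. -/
structure IsLinkedSystem (N : Subgroup G) [DecidablePred (· ∈ N)] (l μ ν : ℕ)
    (X : U → Finset G) : Prop where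
  inv_eq : ∀ u ≠ 1, (X u)⁻¹ = X u⁻¹
  isComplement : ∀ u ≠ 1, Subgroup.IsComplement (X u : Set G) N
  mul_inv_eq : ∀ u ≠ 1, grpSum G (X u) * grpSum G (X u⁻¹) =
    ((Nat.card N * l : ℕ) : ℤ) • (1 : MonoidAlgebra ℤ G) + (l : ℤ) • grpSum G {x | x ∉ N}
  mul_eq : ∀ u v, u ≠ 1 → v ≠ 1 → u * v ≠ 1 → grpSum G (X u) * grpSum G (X v) =
    (μ : ℤ) • grpSum G (X (u * v)) + (ν : ℤ) • grpSum G (X (u * v))ᶜ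

variable {N : Subgroup G} [DecidablePred (· ∈ N)] {X : U → Finset G} {l μ ν : ℕ}

lemma IsLinkedSystem.card_eq_index (hX : IsLinkedSystem N l μ ν X) {u : U} (hu : u ≠ 1) :
    (X u).card = N.index := by
  simpa using (hX.isComplement u hu).ncard_left

variable (N X) [Fintype U] [DecidableEq U]

/-- The five basic sets `T₀, …, T₄` in `G × U`. -/
def linkedCells : Fin 5 → Finset (G × U) :=
  ![{(1, 1)},
    Finset.erase {x | x ∈ N} 1 ×ˢ {1},
    ({x | x ∉ N} : Finset G) ×ˢ {1},
    Finset.univ.filter fun p ↦ p.2 ≠ 1 ∧ p.1 ∈ X p.2,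
    Finset.univ.filter fun p ↦ p.2 ≠ 1 ∧ p.1 ∉ X p.2]

lemma mk_mem_linkedCells (i : Fin 5) (g : G) (u : U) : (g, u) ∈ linkedCells N X i ↔
    ![g = 1 ∧ u = 1, (g ≠ 1 ∧ g ∈ N) ∧ u = 1, g ∉ N ∧ u = 1,
      u ≠ 1 ∧ g ∈ X u, u ≠ 1 ∧ g ∉ X u] i := by
  fin_cases i <;> simp [linkedCells, -Finset.product_singleton]

lemma linkedCells_disjoint (i j : Fin 5) (hij : i ≠ j) :
    Disjoint (linkedCells N X i) (linkedCells N X j) := by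
  have hone := N.one_mem
  rw [Finset.disjoint_left]
  rintro ⟨g, u⟩
  simp only [mk_mem_linkedCells]
  fin_cases i <;> fin_cases j <;> simp only [Fin.reduceFinMk, Matrix.cons_val] <;> grind

lemma linkedCells_union : linkedCells N X 0 ∪ linkedCells N X 1 ∪ linkedCells N X 2 ∪
    linkedCells N X 3 ∪ linkedCells N X 4 = Finset.univ := by
  ext ⟨g, u⟩
  simp only [Finset.mem_union, mk_mem_linkedCells, Matrix.cons_val, Finset.mem_univ]
  tauto

/-- Unions of the basic sets, as elements of `ℤ[G × U]`: the identity, `T₃`, `N`, `G` and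
`G × (U ∖ {1})`. The order is chosen so that products `b i * b j` with `i ≤ j` only need
the left-coset condition on `X u`. -/
noncomputable def linkedBasis : Fin 5 → MonoidAlgebra ℤ (G × U) :=
  ![1,
    offOne fun u ↦ grpSum G (X u),
    layer 1 (grpSum G {x | x ∈ N}),
    layer 1 (grpSum G Finset.univ),
    offOne fun _ ↦ grpSum G Finset.univ]

lemma grpSum_linkedCells (i : Fin 5) : grpSum (G × U) (linkedCells N X i) =
    ![1,
      layer 1 (grpSum G {x | x ∈ N}) - 1,
      layer 1 (grpSum G Finset.univ) - layer 1 (grpSum G {x | x ∈ N}),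
      offOne fun u ↦ grpSum G (X u),
      (offOne fun _ ↦ grpSum G Finset.univ) - offOne fun u ↦ grpSum G (X u)] i := by
  fin_cases i
  · exact grpSum_singleton_one
  · have herase : grpSum G (Finset.erase {x | x ∈ N} 1) = grpSum G {x | x ∈ N} - 1 := by
      rw [grpSum, Finset.sum_erase_eq_sub (by simp [N.one_mem]), map_one, grpSum]
    refine (layer_grpSum 1 _).symm.trans ?_
    rw [herase, map_sub, layer_one_one]
    rfl
  · refine (layer_grpSum 1 _).symm.trans ?_
    rw [grpSum_notMem_subgroup, map_sub]
    rfl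
  · exact (offOne_grpSum X).symm
  · refine Eq.trans ?_ (offOne_grpSum_compl X)
    rw [offOne_grpSum]
    simp only [Finset.mem_compl]
    rfl

lemma span_linkedBasis : Submodule.span ℤ (Set.range (linkedBasis N X)) =
    Submodule.span ℤ (Set.range fun i ↦ grpSum (G × U) (linkedCells N X i)) := by
  apply le_antisymm <;> rw [Submodule.span_le] <;> rintro _ ⟨i, rfl⟩ <;>
    rw [SetLike.mem_coe]
  · have hT (k : Fin 5) := Submodule.subset_span (R := ℤ)
      (Set.mem_range_self (f := fun i ↦ grpSum (G × U) (linkedCells N X i)) k)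
    simp only [grpSum_linkedCells] at hT ⊢
    fin_cases i
    · exact hT 0
    · exact hT 3
    · simpa [linkedBasis] using add_mem (hT 1) (hT 0)
    · simpa [linkedBasis] using add_mem (hT 2) (add_mem (hT 1) (hT 0))
    · simpa [linkedBasis] using add_mem (hT 4) (hT 3)
  · have hb (k : Fin 5) := Submodule.subset_span (R := ℤ)
      (Set.mem_range_self (f := linkedBasis N X) k)
    simp only [grpSum_linkedCells]
    fin_cases i
    exacts [hb 0, sub_mem (hb 2) (hb 0), sub_mem (hb 3) (hb 2), hb 1, sub_mem (hb 4) (hb 1)]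

variable {N X}

namespace IsLinkedSystem

lemma inv_linkedCells (hX : IsLinkedSystem N l μ ν X) (i : Fin 5) :
    (linkedCells N X i)⁻¹ = linkedCells N X i := by
  have hinv (u : U) (hu : u ≠ 1) (g : G) : g⁻¹ ∈ X u⁻¹ ↔ g ∈ X u := by
    rw [← hX.inv_eq u hu, Finset.mem_inv', inv_inv]
  ext ⟨g, u⟩
  rw [Finset.mem_inv', Prod.inv_mk, mk_mem_linkedCells, mk_mem_linkedCells]
  fin_cases i <;> simp +contextual [hinv]

lemma linkedCells_nonempty [Nontrivial U] (hX : IsLinkedSystem N l μ ν X) (hbot : N ≠ ⊥)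
    (htop : N ≠ ⊤) (i : Fin 5) : (linkedCells N X i).Nonempty := by
  obtain ⟨u, hu⟩ := exists_ne (1 : U)
  fin_cases i
  · exact Finset.singleton_nonempty _
  · obtain ⟨x, hx, hx1⟩ := N.bot_or_exists_ne_one.resolve_left hbot
    exact ⟨(x, 1), by simp [linkedCells, hx, hx1]⟩
  · obtain ⟨x, hx⟩ := SetLike.exists_not_mem_of_ne_top N htop
    exact ⟨(x, 1), by simp [linkedCells, hx]⟩
  · obtain ⟨x, hx⟩ := (hX.isComplement u hu).nonempty_left
    exact ⟨(x, u), by simpa [linkedCells, hu] using hx⟩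
  · obtain ⟨x, hx⟩ : ∃ x, x ∉ X u := by
      by_contra! hall
      have huniv : Subgroup.IsComplement' ⊤ N := by
        simpa [Subgroup.IsComplement', Set.eq_univ_of_forall hall] using hX.isComplement u hu
      exact hbot (Subgroup.isComplement'_top_left.1 huniv)
    exact ⟨(x, u), by simp [linkedCells, hu, hx]⟩

lemma offOne_mul_layer_one_subgroup (hX : IsLinkedSystem N l μ ν X) :
    offOne (fun u ↦ grpSum G (X u)) * layer 1 (grpSum G {x | x ∈ N}) =
      offOne fun _ ↦ grpSum G Finset.univ := by
  rw [offOne_mul_layer_one]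
  exact offOne_congr fun u hu ↦
    grpSum_mul_grpSum_subgroup_of_isComplement N (hX.isComplement u hu)

lemma offOne_mul_self (hX : IsLinkedSystem N l μ ν X) :
    offOne (fun u ↦ grpSum G (X u)) * offOne (fun u ↦ grpSum G (X u)) =
    (Fintype.card U - 1) • (((Nat.card N * l : ℕ) : ℤ) • 1 +
      (l : ℤ) • (layer 1 (grpSum G Finset.univ) - layer 1 (grpSum G {x | x ∈ N}))) +
    (Fintype.card U - 2) • ((μ : ℤ) • (offOne fun u ↦ grpSum G (X u)) +
      (ν : ℤ) • (offOne (fun _ ↦ grpSum G Finset.univ) - offOne fun u ↦ grpSum G (X u))) := by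
  have hlayer : layer (1 : U) (((Nat.card N * l : ℕ) : ℤ) • 1 + (l : ℤ) • grpSum G {x | x ∉ N}) =
      ((Nat.card N * l : ℕ) : ℤ) • 1 +
        (l : ℤ) • (layer 1 (grpSum G Finset.univ) - layer 1 (grpSum G {x | x ∈ N})) := by
    rw [map_add, map_smul, map_smul, layer_one_one, grpSum_notMem_subgroup, map_sub]
  have hoff : offOne (fun u ↦ (μ : ℤ) • grpSum G (X u) + (ν : ℤ) • grpSum G (X u)ᶜ) =
      (μ : ℤ) • (offOne fun u ↦ grpSum G (X u)) +
        (ν : ℤ) • (offOne (fun _ ↦ grpSum G Finset.univ) - offOne fun u ↦ grpSum G (X u)) := by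
    rw [← offOne_grpSum_compl, ← map_smul, ← map_smul, ← map_add]
    rfl
  rw [← hlayer, ← hoff]
  exact offOne_mul_offOne hX.mul_inv_eq hX.mul_eq

lemma linkedBasis_mul_mem (hX : IsLinkedSystem N l μ ν X) (i j : Fin 5) (hij : i ≤ j) :
    linkedBasis N X i * linkedBasis N X j ∈
      Submodule.span ℤ (Set.range (linkedBasis N X)) := by
  set V := Submodule.span ℤ (Set.range (linkedBasis N X))
  have mem_of_eq {x y : MonoidAlgebra ℤ (G × U)} (hxy : x = y) (hy : y ∈ V) : x ∈ V := hxy ▸ hy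
  have hb (k : Fin 5) : linkedBasis N X k ∈ V := Submodule.subset_span ⟨k, rfl⟩
  have hsmul (c : ℤ) (k : Fin 5) := V.smul_mem c (hb k)
  have hcombo (c d : ℕ) (m : ℤ) := add_mem (nsmul_mem (hsmul m 3) c) (nsmul_mem (hsmul m 4) d)
  have hcard (u : U) (hu : u ≠ 1) := hX.card_eq_index hu
  fin_cases i
  · exact mem_of_eq (one_mul _) (hb j)
  all_goals fin_cases j <;> first | exact absurd hij (by decide) | skip
  · refine mem_of_eq hX.offOne_mul_self (add_mem (nsmul_mem (add_mem ?_ ?_) _)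
      (nsmul_mem (add_mem ?_ ?_) _)) <;> apply V.smul_mem
    exacts [hb 0, sub_mem (hb 3) (hb 2), hb 1, sub_mem (hb 4) (hb 1)]
  · exact mem_of_eq hX.offOne_mul_layer_one_subgroup (hb 4)
  · exact mem_of_eq (offOne_mul_layer_one_univ hcard) (hsmul _ 4)
  · exact mem_of_eq (offOne_mul_offOne_univ hcard) (hcombo _ _ _)
  · exact mem_of_eq (layer_one_mul_layer_one_subgroup N (by simp)) (hsmul _ 2)
  · exact mem_of_eq (layer_one_mul_layer_one_univ _) (hsmul _ 3)
  · exact mem_of_eq (layer_one_mul_offOne_univ _) (hsmul _ 4)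
  · exact mem_of_eq (layer_one_mul_layer_one_univ _) (hsmul _ 3)
  · exact mem_of_eq (layer_one_mul_offOne_univ _) (hsmul _ 4)
  · exact mem_of_eq (offOne_mul_offOne_univ fun _ _ ↦ Finset.card_univ) (hcombo _ _ _)

lemma span_linkedCells_le_antipodeFixed (hX : IsLinkedSystem N l μ ν X) :
    Submodule.span ℤ (Set.range fun i ↦ grpSum (G × U) (linkedCells N X i)) ≤
      antipodeFixed ℤ _ := by
  rw [Submodule.span_le]
  rintro _ ⟨i, rfl⟩
  exact grpSum_mem_antipodeFixed (hX.inv_linkedCells i)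

lemma grpSum_mul_mem_span (hX : IsLinkedSystem N l μ ν X) (i j : Fin 5) :
    grpSum (G × U) (linkedCells N X i) * grpSum (G × U) (linkedCells N X j) ∈
      Submodule.span ℤ (Set.range fun k ↦ grpSum (G × U) (linkedCells N X k)) := by
  have hfix := hX.span_linkedCells_le_antipodeFixed
  rw [← span_linkedBasis] at hfix ⊢
  refine mul_mem_span_range_of_le_antipodeFixed hfix hX.linkedBasis_mul_mem ?_ ?_ <;>
    exact span_linkedBasis N X ▸ Submodule.subset_span ⟨_, rfl⟩

lemma commute_grpSum_linkedCells (hX : IsLinkedSystem N l μ ν X) (i j : Fin 5) :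
    Commute (grpSum (G × U) (linkedCells N X i)) (grpSum (G × U) (linkedCells N X j)) :=
  commute_of_mem_antipodeFixed (grpSum_mem_antipodeFixed (hX.inv_linkedCells i))
    (grpSum_mem_antipodeFixed (hX.inv_linkedCells j))
    (hX.span_linkedCells_le_antipodeFixed (hX.grpSum_mul_mem_span i j))

end IsLinkedSystem

end LinkedSystem

theorem linked_system_gives_S_ring
    {G U : Type*} [Group G] [Fintype G] [DecidableEq G]
    [Group U] [Fintype U] [DecidableEq U]
    (N : Subgroup G) [DecidablePred (· ∈ N)]
    (n l w μ ν : ℕ) (hn : 2 ≤ n) (hN : Nat.card N = n) (hl : 1 ≤ l)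
    (hG : Fintype.card G = n ^ 2 * l) (hU : Fintype.card U = w + 1) (hw : 2 ≤ w)
    (X : U → Finset G)
    (hXinv : ∀ u : U, u ≠ 1 → (X u)⁻¹ = X u⁻¹)
    (hXtrans : ∀ u : U, u ≠ 1 → ∀ g : G, ((X u).filter (fun x => g⁻¹ * x ∈ N)).card = 1)
    (hXX : ∀ u : U, u ≠ 1 →
      grpSum G (X u) * grpSum G (X u⁻¹) =
        ((n * l : ℕ) : ℤ) • (1 : MonoidAlgebra ℤ G) +
          (l : ℤ) • grpSum G (Finset.univ.filter (· ∉ N)))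
    (hXY : ∀ u v : U, u ≠ 1 → v ≠ 1 → u * v ≠ 1 →
      grpSum G (X u) * grpSum G (X v) =
        (μ : ℤ) • grpSum G (X (u * v)) + (ν : ℤ) • grpSum G (Finset.univ \ X (u * v)))
    (T₀ T₁ T₂ T₃ T₄ : Finset (G × U))
    (hT₀ : T₀ = {(1, 1)})
    (hT₁ : T₁ = ((Finset.univ.filter (· ∈ N)).erase 1) ×ˢ {(1 : U)})
    (hT₂ : T₂ = (Finset.univ.filter (· ∉ N)) ×ˢ {(1 : U)})
    (hT₃ : T₃ = Finset.univ.filter (fun p : G × U => p.2 ≠ 1 ∧ p.1 ∈ X p.2))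
    (hT₄ : T₄ = Finset.univ.filter (fun p : G × U => p.2 ≠ 1 ∧ p.1 ∉ X p.2)) :
    ∀ T : Fin 5 → Finset (G × U), T = ![T₀, T₁, T₂, T₃, T₄] →
      (∀ i, (T i).Nonempty) ∧
      (∀ i j, i ≠ j → Disjoint (T i) (T j)) ∧
      (T 0 ∪ T 1 ∪ T 2 ∪ T 3 ∪ T 4 = Finset.univ) ∧
      (∀ i, (T i)⁻¹ = T i) ∧
      (∀ i j, ∃ c : Fin 5 → ℕ,
        grpSum (G × U) (T i) * grpSum (G × U) (T j) =
          (c 0 : ℤ) • grpSum (G × U) (T 0) + (c 1 : ℤ) • grpSum (G × U) (T 1) +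
            (c 2 : ℤ) • grpSum (G × U) (T 2) + (c 3 : ℤ) • grpSum (G × U) (T 3) +
            (c 4 : ℤ) • grpSum (G × U) (T 4)) ∧
      (∀ i j, grpSum (G × U) (T i) * grpSum (G × U) (T j) =
        grpSum (G × U) (T j) * grpSum (G × U) (T i)) := by
  intro T hT
  have hX : IsLinkedSystem N l μ ν X :=
    { inv_eq := hXinv
      isComplement := fun u hu ↦ (isComplement_iff_card_filter_eq_one N).2 (hXtrans u hu)
      mul_inv_eq := by rwa [hN]
      mul_eq := by simpa only [Finset.compl_eq_univ_sdiff] using hXY }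
  have hbot : N ≠ ⊥ := by
    rintro rfl
    rw [Subgroup.card_bot] at hN
    omega
  have htop : N ≠ ⊤ := by
    rintro rfl
    rw [Subgroup.card_top, Nat.card_eq_fintype_card, hG] at hN
    nlinarith
  have : Nontrivial U := Fintype.one_lt_card_iff_nontrivial.1 (by omega)
  obtain rfl : T = linkedCells N X := by rw [hT, hT₀, hT₁, hT₂, hT₃, hT₄, linkedCells]
  have hne := hX.linkedCells_nonempty hbot htop
  have hdisj := linkedCells_disjoint N X
  refine ⟨hne, hdisj, linkedCells_union N X, hX.inv_linkedCells, fun i j ↦ ?_,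
    hX.commute_grpSum_linkedCells⟩
  simpa only [Fin.sum_univ_five] using
    exists_nat_coeff_of_grpSum_mul_mem_span hne hdisj (hX.grpSum_mul_mem_span i j)
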